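/- Adopt the MDP data with Lipschitz assumptions, the robust Bellman operator, the Q-operators, the comparison function ψ, and Diff₂, and let μ_true be a second Borel probability measure on W with true operators Φ_true,t and Q_true,{t,v} defined from μ_true as Φ_t and Q_{t,v} are defined from μ. Let μ̂ be a Borel probability measure on W, ε ∈ [0,∞), and P = { ν : d(ν, μ̂) ≤ ε } (nonempty since d(μ̂, μ̂) = 0). Then for every bounded L_v-Lipschitz v : X → ℝ and every t ≥ 1: |Q_true,{t,v}(x,a) − Q̃^P_{t,v}(x,a)| ≤ (ψ(d(μ, μ̂)) + ψ(ε) + β(μ_true, μ)) · Diff₂(t,v) for all (x,a) ∈ X × A, and |(Φ_true,t v)(x) − (Φ̃^P_t v)(x)| ≤ (ψ(d(μ, μ̂)) + ψ(ε) + β(μ_true, μ)) · Diff₂(t,v) for all x ∈ X. (Lemma C.7.) -/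

import Mathlib

/-!
The true Bellman operator is the robust one for the ambiguity set `{μ_true}`, so both kinds of
iterates can be treated at once. A robust Bellman step maps a function bounded by `M` and
`K`-Lipschitz to one bounded by `Mc + α M` and `(Lc + α LF K)`-Lipschitz (`IsBL.robustPhi`): both
bounds hold for the integrand `c(x,a,z) + α v(F(x,a,z))` and survive integration, suprema over `P`
and infima over the actions. In particular the integrand is also bounded and Lipschitz in `z`, so
replacing `μ_true` by some `ν ∈ P` changes its integral by at most
`δ (Mc + Lc + α M + α LF K)`, where `δ` bounds the bounded Lipschitz distance from `μ_true` to the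
points of `P` (`abs_integral_sub_le`). Hence the distance `e_s` between the `s`-th iterates satisfies
`e_0 = 0` and `e_{s+1} ≤ δ (Mc + Lc + α M_s + α LF K_s) + α e_s`, with `M_s`, `K_s` the bound and
Lipschitz constant of the true iterate (`valBd`, `valLip`). Solving the recursion gives exactly
`δ · Diff2` (`errSum_eq_Diff2`).

By the triangle inequality `δ = ψ(d(μ,μ̂)) + ψ(ε) + β(μ_true,μ)` is admissible when `d(μ,μ̂)` is
finite. When it is infinite the right-hand side is `∞` unless `Diff2 = 0`, and in that case `δ = 2`,
which is always admissible, shows that the left-hand side vanishes.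
-/

open MeasureTheory Filter Topology
open scoped ENNReal NNReal Classical

noncomputable section

/-- The condition `‖f‖_L + ‖f‖_∞ ≤ 1` on a function `f : W → ℝ`. -/
def BLle1 {W : Type*} [PseudoMetricSpace W] (f : W → ℝ) : Prop :=
  ∃ L C : ℝ, 0 ≤ L ∧ 0 ≤ C ∧ L + C ≤ 1 ∧
    (∀ x y, |f x - f y| ≤ L * dist x y) ∧ ∀ x, |f x| ≤ C

/-- The bounded Lipschitz metric. -/
def betaDist {W : Type*} [PseudoMetricSpace W] [MeasurableSpace W]
    (μ ν : Measure W) : ℝ :=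
  sSup {r : ℝ | ∃ f : W → ℝ, Measurable f ∧ BLle1 f ∧
    r = |∫ z, f z ∂μ - ∫ z, f z ∂ν|}

/-- The extension of `ψ : [0,∞) → [0,∞)` to `[0,∞]` by `ψ(∞) = ∞`. -/
def psiE (ψ : ℝ → ℝ) (x : ℝ≥0∞) : ℝ≥0∞ :=
  if x = ⊤ then ⊤ else ENNReal.ofReal (ψ x.toReal)

/-- The quantity `Diff₂(t,v)` of Lemma C.5, where `Mc` bounds `‖c‖_∞`, `Mv` bounds `‖v‖_∞`
and `Lv` is a Lipschitz constant of `v`. -/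
def Diff2 (α Lc LF Mc Mv Lv : ℝ) (t : ℕ) : ℝ :=
  (Mc + Lc) * ∑ k ∈ Finset.range t, α ^ k
    + α ^ t * (Mv + Lv * LF)
    + Mc * ∑ j ∈ Finset.Icc 1 (t - 1), α ^ j * ∑ k ∈ Finset.range (t - j), α ^ k
    + ((t : ℝ) - 1) * α ^ t * Mv
    + α * Lc * LF * ∑ j ∈ Finset.Icc 1 t, α ^ (j - 1) * ∑ k ∈ Finset.range (t - j), (α * LF) ^ k
    + α * Lv * LF * ∑ j ∈ Finset.Icc 1 (t - 1), (α * LF) ^ j * α ^ (t - j - 1)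

/-- The Bellman operator `(Φ v)(x) = inf_{a ∈ A} ∫ (c(x,a,z) + α v(F(x,a,z))) μ(dz)`. -/
def bellmanPhi {X 𝔸 W : Type*} [MeasurableSpace W]
    (F : X → 𝔸 → W → X) (c : X → 𝔸 → W → ℝ) (α : ℝ) (μ : Measure W)
    (v : X → ℝ) (x : X) : ℝ :=
  ⨅ a : 𝔸, ∫ z, (c x a z + α * v (F x a z)) ∂μ

/-- The robust Bellman operator
`(Φ̃^P v)(x) = inf_{a ∈ A} sup_{ν ∈ P} ∫ (c(x,a,z) + α v(F(x,a,z))) ν(dz)`. -/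
def robustPhi {X 𝔸 W : Type*} [MeasurableSpace W]
    (F : X → 𝔸 → W → X) (c : X → 𝔸 → W → ℝ) (α : ℝ) (P : Set (Measure W))
    (v : X → ℝ) (x : X) : ℝ :=
  ⨅ a : 𝔸, sSup {r : ℝ | ∃ ν ∈ P, r = ∫ z, (c x a z + α * v (F x a z)) ∂ν}

/-- The Q-operator `Q_{t,v}(x,a) = ∫ (c(x,a,z) + α (Φ_{t−1} v)(F(x,a,z))) μ(dz)`. -/
def Qop {X 𝔸 W : Type*} [MeasurableSpace W]
    (F : X → 𝔸 → W → X) (c : X → 𝔸 → W → ℝ) (α : ℝ) (μ : Measure W)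
    (t : ℕ) (v : X → ℝ) (x : X) (a : 𝔸) : ℝ :=
  ∫ z, (c x a z + α * ((bellmanPhi F c α μ)^[t - 1] v) (F x a z)) ∂μ

/-- The robust Q-operator
`Q̃^P_{t,v}(x,a) = sup_{ν ∈ P} ∫ (c(x,a,z) + α (Φ̃^P_{t−1} v)(F(x,a,z))) ν(dz)`. -/
def robustQop {X 𝔸 W : Type*} [MeasurableSpace W]
    (F : X → 𝔸 → W → X) (c : X → 𝔸 → W → ℝ) (α : ℝ) (P : Set (Measure W))
    (t : ℕ) (v : X → ℝ) (x : X) (a : 𝔸) : ℝ :=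
  sSup {r : ℝ | ∃ ν ∈ P, r = ∫ z, (c x a z + α * ((robustPhi F c α P)^[t - 1] v) (F x a z)) ∂ν}

/-- `v` is bounded by `M` and `K`-Lipschitz. -/
def IsBL {Y : Type*} [PseudoMetricSpace Y] (M K : ℝ) (v : Y → ℝ) : Prop :=
  (∀ x, |v x| ≤ M) ∧ ∀ x y, |v x - v y| ≤ K * dist x y

/-- The quantitative assumptions on the cost, the system map and the discount factor. -/
structure LipData {X 𝔸 W : Type*} [PseudoMetricSpace X] [PseudoMetricSpace W]
    (F : X → 𝔸 → W → X) (c : X → 𝔸 → W → ℝ) (α Mc Lc LF : ℝ) : Prop where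
  hα : 0 ≤ α
  hLc : 0 ≤ Lc
  hLF : 0 ≤ LF
  cbd : ∀ x a z, |c x a z| ≤ Mc
  cX : ∀ a z x₁ x₂, |c x₁ a z - c x₂ a z| ≤ Lc * dist x₁ x₂
  cW : ∀ x a z₁ z₂, |c x a z₁ - c x a z₂| ≤ Lc * dist z₁ z₂
  FX : ∀ a z x₁ x₂, dist (F x₁ a z) (F x₂ a z) ≤ LF * dist x₁ x₂
  FW : ∀ x a z₁ z₂, dist (F x a z₁) (F x a z₂) ≤ LF * dist z₁ z₂

/-- The robust one-step value `sup_{ν ∈ P} ∫ (c(x,a,z) + α v(F(x,a,z))) ν(dz)` of the action `a`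
at the state `x`, with terminal value `v`. -/
def stepQ {X 𝔸 W : Type*} [MeasurableSpace W]
    (F : X → 𝔸 → W → X) (c : X → 𝔸 → W → ℝ) (α : ℝ) (P : Set (Measure W))
    (v : X → ℝ) (x : X) (a : 𝔸) : ℝ :=
  sSup {r : ℝ | ∃ ν ∈ P, r = ∫ z, (c x a z + α * v (F x a z)) ∂ν}

/-! ### Suprema and infima of families -/

lemma abs_sSup_le {ι : Type*} {P : Set ι} (hP : P.Nonempty) {f : ι → ℝ} {B : ℝ}
    (hf : ∀ i ∈ P, |f i| ≤ B) : |sSup {r | ∃ i ∈ P, r = f i}| ≤ B := by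
  obtain ⟨i, hi⟩ := hP
  have hb : BddAbove {r | ∃ i ∈ P, r = f i} := by
    refine ⟨B, ?_⟩
    rintro r ⟨j, hj, rfl⟩
    exact (abs_le.1 (hf j hj)).2
  rw [abs_le]
  constructor
  · exact (abs_le.1 (hf i hi)).1.trans (le_csSup hb ⟨i, hi, rfl⟩)
  · refine csSup_le ⟨_, i, hi, rfl⟩ ?_
    rintro r ⟨j, hj, rfl⟩
    exact (abs_le.1 (hf j hj)).2

lemma abs_sSup_sub_sSup_le {ι : Type*} {P : Set ι} (hP : P.Nonempty) {f g : ι → ℝ} {B B' e : ℝ}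
    (hf : ∀ i ∈ P, |f i| ≤ B) (hg : ∀ i ∈ P, |g i| ≤ B') (h : ∀ i ∈ P, |f i - g i| ≤ e) :
    |sSup {r | ∃ i ∈ P, r = f i} - sSup {r | ∃ i ∈ P, r = g i}| ≤ e := by
  have key : ∀ {f g : ι → ℝ} {B' : ℝ}, (∀ i ∈ P, |g i| ≤ B') → (∀ i ∈ P, |f i - g i| ≤ e) →
      sSup {r | ∃ i ∈ P, r = f i} ≤ sSup {r | ∃ i ∈ P, r = g i} + e := by
    intro f g B' hg h
    obtain ⟨i, hi⟩ := hP
    refine csSup_le ⟨_, i, hi, rfl⟩ ?_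
    rintro r ⟨j, hj, rfl⟩
    have hb : BddAbove {r | ∃ i ∈ P, r = g i} := by
      refine ⟨B', ?_⟩
      rintro r ⟨k, hk, rfl⟩
      exact (abs_le.1 (hg k hk)).2
    have h1 : g j ≤ sSup {r | ∃ i ∈ P, r = g i} := le_csSup hb ⟨j, hj, rfl⟩
    have h2 := (abs_le.1 (h j hj)).2
    linarith
  have h1 := key hg h
  have h2 := key hf (fun i hi => by rw [abs_sub_comm]; exact h i hi)
  rw [abs_le]
  constructor <;> linarith

lemma abs_iInf_le {ι : Type*} [Nonempty ι] {f : ι → ℝ} {B : ℝ}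
    (hf : ∀ i, |f i| ≤ B) : |⨅ i, f i| ≤ B := by
  have hb : BddBelow (Set.range f) := by
    refine ⟨-B, ?_⟩
    rintro r ⟨j, rfl⟩
    exact (abs_le.1 (hf j)).1
  obtain ⟨i⟩ := ‹Nonempty ι›
  rw [abs_le]
  constructor
  · have : Nonempty ι := ⟨i⟩
    exact le_ciInf fun j => (abs_le.1 (hf j)).1
  · exact (ciInf_le hb i).trans (abs_le.1 (hf i)).2

lemma abs_iInf_sub_iInf_le {ι : Type*} [Nonempty ι] {f g : ι → ℝ} {B B' e : ℝ}
    (hf : ∀ i, |f i| ≤ B) (hg : ∀ i, |g i| ≤ B') (h : ∀ i, |f i - g i| ≤ e) :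
    |(⨅ i, f i) - ⨅ i, g i| ≤ e := by
  have key : ∀ {f g : ι → ℝ} {B : ℝ}, (∀ i, |f i| ≤ B) → (∀ i, |f i - g i| ≤ e) →
      (⨅ i, f i) - e ≤ ⨅ i, g i := by
    intro f g B hf h
    refine le_ciInf fun j => ?_
    have hb : BddBelow (Set.range f) := by
      refine ⟨-B, ?_⟩
      rintro r ⟨k, rfl⟩
      exact (abs_le.1 (hf k)).1
    have h1 : (⨅ i, f i) ≤ f j := ciInf_le hb j
    have h2 := (abs_le.1 (h j)).2
    linarith
  have h1 := key hf h
  have h2 := key hg (fun i => by rw [abs_sub_comm]; exact h i)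
  rw [abs_le]
  constructor <;> linarith

/-! ### Integrals of bounded Lipschitz functions and the metric `betaDist` -/

section Integrals

variable {W : Type*} [MetricSpace W] [MeasurableSpace W] [BorelSpace W]

lemma IsBL.continuous {Y : Type*} [PseudoMetricSpace Y] {f : Y → ℝ} {C L : ℝ}
    (hf : IsBL C L f) : Continuous f := by
  have : LipschitzWith L.toNNReal f := by
    refine LipschitzWith.of_dist_le_mul fun x y => ?_
    rw [Real.dist_eq]
    refine (hf.2 x y).trans ?_
    gcongr
    exact Real.le_coe_toNNReal L
  exact this.continuous

lemma IsBL.integrable {f : W → ℝ} {C L : ℝ} (hf : IsBL C L f)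
    (μ : Measure W) [IsProbabilityMeasure μ] : Integrable f μ :=
  Integrable.of_bound hf.continuous.measurable.aestronglyMeasurable C
    (Eventually.of_forall fun z => by simpa using hf.1 z)

lemma abs_integral_le_of_bound {f : W → ℝ} {C : ℝ} (hf : ∀ z, |f z| ≤ C)
    (μ : Measure W) [IsProbabilityMeasure μ] : |∫ z, f z ∂μ| ≤ C := by
  have := norm_integral_le_of_norm_le_const (μ := μ) (f := f) (C := C)
    (Eventually.of_forall fun z => by simpa using hf z)
  simpa using this

lemma betaSet_le_two {μ ν : Measure W} [IsProbabilityMeasure μ] [IsProbabilityMeasure ν] :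
    ∀ r ∈ {r : ℝ | ∃ f : W → ℝ, Measurable f ∧ BLle1 f ∧ r = |∫ z, f z ∂μ - ∫ z, f z ∂ν|},
      r ≤ 2 := by
  rintro r ⟨f, -, ⟨L, C, hL, hC, hLC, -, hb⟩, rfl⟩
  have h1 := abs_integral_le_of_bound hb μ
  have h2 := abs_integral_le_of_bound hb ν
  have h3 := abs_sub (∫ z, f z ∂μ) (∫ z, f z ∂ν)
  linarith

lemma betaDist_nonneg (μ ν : Measure W) : 0 ≤ betaDist μ ν := by
  refine Real.sSup_nonneg ?_
  rintro r ⟨f, -, -, rfl⟩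
  exact abs_nonneg _

lemma betaDist_le_two (μ ν : Measure W) [IsProbabilityMeasure μ] [IsProbabilityMeasure ν] :
    betaDist μ ν ≤ 2 :=
  Real.sSup_le betaSet_le_two (by norm_num)

/-- The defining property of `betaDist`, extended by homogeneity to arbitrary bounded Lipschitz
functions. -/
lemma abs_integral_sub_le {f : W → ℝ} {C L : ℝ} (hC : 0 ≤ C) (hL : 0 ≤ L) (hf : IsBL C L f)
    (μ ν : Measure W) [IsProbabilityMeasure μ] [IsProbabilityMeasure ν] :
    |∫ z, f z ∂μ - ∫ z, f z ∂ν| ≤ betaDist μ ν * (C + L) := by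
  rcases (add_nonneg hC hL).eq_or_lt with h0 | hpos
  · have hC0 : C = 0 := by linarith
    have hz : ∀ z, f z = 0 := fun z => abs_nonpos_iff.1 (hC0 ▸ hf.1 z)
    simp [hz, ← h0]
  · have hmem : |∫ z, (C + L)⁻¹ * f z ∂μ - ∫ z, (C + L)⁻¹ * f z ∂ν| ≤ betaDist μ ν := by
      refine le_csSup ⟨2, betaSet_le_two⟩ ⟨fun z => (C + L)⁻¹ * f z,
        (hf.continuous.measurable.const_mul _), ⟨(C + L)⁻¹ * L, (C + L)⁻¹ * C, by positivity,
          by positivity, ?_, fun x y => ?_, fun x => ?_⟩, rfl⟩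
      · rw [← mul_add, add_comm L C, inv_mul_cancel₀ hpos.ne']
      · rw [← mul_sub, abs_mul, abs_of_pos (inv_pos.2 hpos), mul_assoc]
        exact mul_le_mul_of_nonneg_left (hf.2 x y) (inv_pos.2 hpos).le
      · rw [abs_mul, abs_of_pos (inv_pos.2 hpos)]
        exact mul_le_mul_of_nonneg_left (hf.1 x) (inv_pos.2 hpos).le
    rw [integral_const_mul, integral_const_mul, ← mul_sub, abs_mul, abs_of_pos (inv_pos.2 hpos),
      inv_mul_le_iff₀ hpos] at hmem
    linarith

end Integrals

/-! ### One Bellman step -/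

section Step

variable {X 𝔸 W : Type*} [MetricSpace X] [MetricSpace W] [MeasurableSpace W] [BorelSpace W]
  {F : X → 𝔸 → W → X} {c : X → 𝔸 → W → ℝ} {α Mc Lc LF : ℝ}

lemma bellmanPhi_eq (μ : Measure W) : bellmanPhi F c α μ = robustPhi F c α {μ} := by
  funext v x
  simp [bellmanPhi, robustPhi]

lemma LipData.isBL_integrand (H : LipData F c α Mc Lc LF) {v : X → ℝ} {M K : ℝ} (hK : 0 ≤ K)
    (hv : IsBL M K v) (x : X) (a : 𝔸) :
    IsBL (Mc + α * M) (Lc + α * LF * K) (fun z => c x a z + α * v (F x a z)) := by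
  constructor
  · intro z
    have h1 := abs_add_le (c x a z) (α * v (F x a z))
    rw [abs_mul, abs_of_nonneg H.hα] at h1
    have h2 := mul_le_mul_of_nonneg_left (hv.1 (F x a z)) H.hα
    have h3 := H.cbd x a z
    linarith
  · intro z w
    have h1 := abs_add_le (c x a z - c x a w) (α * (v (F x a z) - v (F x a w)))
    rw [abs_mul, abs_of_nonneg H.hα] at h1
    have h2 := mul_le_mul_of_nonneg_left ((hv.2 (F x a z) (F x a w)).trans
      (mul_le_mul_of_nonneg_left (H.FW x a z w) hK)) H.hα
    have h3 := H.cW x a z w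
    have e : c x a z + α * v (F x a z) - (c x a w + α * v (F x a w)) =
      c x a z - c x a w + α * (v (F x a z) - v (F x a w)) := by ring
    simp only [e]
    linarith

/-- Integrals of bounded Lipschitz integrands against one measure differ by at most the uniform
distance of the integrands. -/
lemma abs_integral_sub_integral_le {f g : W → ℝ} {C L C' L' e : ℝ} (hf : IsBL C L f)
    (hg : IsBL C' L' g) (h : ∀ z, |f z - g z| ≤ e) (ν : Measure W) [IsProbabilityMeasure ν] :
    |∫ z, f z ∂ν - ∫ z, g z ∂ν| ≤ e := by
  rw [← integral_sub (hf.integrable ν) (hg.integrable ν)]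
  exact abs_integral_le_of_bound h ν

lemma LipData.abs_stepQ_le (H : LipData F c α Mc Lc LF) {v : X → ℝ} {M K : ℝ} (hK : 0 ≤ K)
    (hv : IsBL M K v) {P : Set (Measure W)} (hP : P.Nonempty)
    (hPp : ∀ ν ∈ P, IsProbabilityMeasure ν) (x : X) (a : 𝔸) :
    |stepQ F c α P v x a| ≤ Mc + α * M := by
  refine abs_sSup_le hP fun ν hν => ?_
  have := hPp ν hν
  exact abs_integral_le_of_bound (H.isBL_integrand hK hv x a).1 ν

/-- A robust Bellman step preserves bounded Lipschitz functions, with explicit constants. -/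
lemma IsBL.robustPhi [Nonempty 𝔸] (H : LipData F c α Mc Lc LF) {v : X → ℝ} {M K : ℝ}
    (hK : 0 ≤ K) (hv : IsBL M K v) {P : Set (Measure W)} (hP : P.Nonempty)
    (hPp : ∀ ν ∈ P, IsProbabilityMeasure ν) :
    IsBL (Mc + α * M) (Lc + α * LF * K) (robustPhi F c α P v) := by
  constructor
  · intro x
    exact abs_iInf_le (H.abs_stepQ_le hK hv hP hPp x)
  · intro x y
    refine abs_iInf_sub_iInf_le (H.abs_stepQ_le hK hv hP hPp x) (H.abs_stepQ_le hK hv hP hPp y)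
      fun a => ?_
    have hbd : ∀ x, ∀ ν ∈ P, |∫ z, (c x a z + α * v (F x a z)) ∂ν| ≤ Mc + α * M := by
      intro x ν hν
      have := hPp ν hν
      exact abs_integral_le_of_bound (H.isBL_integrand hK hv x a).1 ν
    refine abs_sSup_sub_sSup_le hP (hbd x) (hbd y) fun ν hν => ?_
    have := hPp ν hν
    refine abs_integral_sub_integral_le (H.isBL_integrand hK hv x a) (H.isBL_integrand hK hv y a)
      (fun z => ?_) ν
    have h1 := abs_add_le (c x a z - c y a z) (α * (v (F x a z) - v (F y a z)))
    rw [abs_mul, abs_of_nonneg H.hα] at h1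
    have h2 := mul_le_mul_of_nonneg_left ((hv.2 (F x a z) (F y a z)).trans
      (mul_le_mul_of_nonneg_left (H.FX a z x y) hK)) H.hα
    have h3 := H.cX a z x y
    have e : c x a z + α * v (F x a z) - (c y a z + α * v (F y a z)) =
      c x a z - c y a z + α * (v (F x a z) - v (F y a z)) := by ring
    rw [e]
    linarith

/-- Error propagation in one step: changing the measure costs `δ` times the bounded Lipschitz norm
of the integrand, and changing the terminal value costs `α e`. -/
lemma LipData.abs_integral_sub_stepQ_le (H : LipData F c α Mc Lc LF) {v u : X → ℝ}
    {M K M' K' e δ : ℝ} (hM : 0 ≤ M) (hK : 0 ≤ K) (hK' : 0 ≤ K') (hMc : 0 ≤ Mc)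
    (hv : IsBL M K v) (hu : IsBL M' K' u) (hvu : ∀ x, |v x - u x| ≤ e)
    (μ : Measure W) [IsProbabilityMeasure μ] {P : Set (Measure W)} (hP : P.Nonempty)
    (hPp : ∀ ν ∈ P, IsProbabilityMeasure ν)
    (hδ : ∀ ν ∈ P, ∀ (f : W → ℝ) (C L : ℝ), 0 ≤ C → 0 ≤ L → IsBL C L f →
      |∫ z, f z ∂μ - ∫ z, f z ∂ν| ≤ δ * (C + L)) (x : X) (a : 𝔸) :
    |(∫ z, (c x a z + α * v (F x a z)) ∂μ) - stepQ F c α P u x a| ≤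
      δ * (Mc + Lc + α * M + α * LF * K) + α * e := by
  have hα := H.hα
  have hLc := H.hLc
  have hLF := H.hLF
  set y := ∫ z, (c x a z + α * v (F x a z)) ∂μ with hy
  have hconst : y = sSup {r : ℝ | ∃ ν ∈ P, r = y} := by
    have : {r : ℝ | ∃ ν ∈ P, r = y} = {y} := by
      ext r
      obtain ⟨ν, hν⟩ := hP
      exact ⟨fun ⟨_, _, h⟩ => h, fun h => ⟨ν, hν, h⟩⟩
    rw [this, csSup_singleton]
  rw [hconst]
  refine abs_sSup_sub_sSup_le hP (B := |y|) (B' := Mc + α * M') (fun _ _ => le_rfl)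
    (fun ν hν => ?_) fun ν hν => ?_
  · have := hPp ν hν
    exact abs_integral_le_of_bound (H.isBL_integrand hK' hu x a).1 ν
  · have := hPp ν hν
    have hBL := H.isBL_integrand hK hv x a
    have h1 := hδ ν hν _ _ _ (by positivity) (by positivity) hBL
    have h2 := abs_integral_sub_integral_le (e := α * e) hBL (H.isBL_integrand hK' hu x a)
      (fun z => by
        rw [add_sub_add_left_eq_sub, ← mul_sub, abs_mul, abs_of_nonneg hα]
        exact mul_le_mul_of_nonneg_left (hvu _) hα) ν
    have h3 := abs_sub_le y (∫ z, (c x a z + α * v (F x a z)) ∂ν)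
      (∫ z, (c x a z + α * u (F x a z)) ∂ν)
    linarith

end Step

/-! ### The error recursion -/

/-- The bound `Mc ∑_{k<s} α^k + α^s Mv` of the `s`-th iterate, in recursive form. -/
def valBd (α Mc Mv : ℝ) : ℕ → ℝ
  | 0 => Mv
  | s + 1 => Mc + α * valBd α Mc Mv s

/-- The Lipschitz constant `Lc ∑_{k<s} (α LF)^k + (α LF)^s Lv` of the `s`-th iterate, in recursive
form. -/
def valLip (α Lc LF Lv : ℝ) : ℕ → ℝ
  | 0 => Lv
  | s + 1 => Lc + α * LF * valLip α Lc LF Lv s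

/-- The error accumulated over `t` steps, per unit of distance between the measures. -/
def errSum (α Lc LF Mc Mv Lv : ℝ) : ℕ → ℝ
  | 0 => 0
  | s + 1 => Mc + Lc + α * valBd α Mc Mv s + α * LF * valLip α Lc LF Lv s
      + α * errSum α Lc LF Mc Mv Lv s

lemma valBd_eq (α Mc Mv : ℝ) (s : ℕ) :
    valBd α Mc Mv s = Mc * ∑ k ∈ Finset.range s, α ^ k + α ^ s * Mv := by
  induction s with
  | zero => simp [valBd]
  | succ n ih => rw [valBd, ih, geom_sum_succ]; ring

lemma valLip_eq (α Lc LF Lv : ℝ) (s : ℕ) :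
    valLip α Lc LF Lv s = Lc * ∑ k ∈ Finset.range s, (α * LF) ^ k + (α * LF) ^ s * Lv := by
  induction s with
  | zero => simp [valLip]
  | succ n ih => rw [valLip, ih, geom_sum_succ]; ring

lemma valBd_nonneg {α Mc Mv : ℝ} (hα : 0 ≤ α) (hMc : 0 ≤ Mc) (hMv : 0 ≤ Mv) (s : ℕ) :
    0 ≤ valBd α Mc Mv s := by
  rw [valBd_eq]; positivity

lemma valLip_nonneg {α Lc LF Lv : ℝ} (hα : 0 ≤ α) (hLc : 0 ≤ Lc) (hLF : 0 ≤ LF) (hLv : 0 ≤ Lv)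
    (s : ℕ) : 0 ≤ valLip α Lc LF Lv s := by
  rw [valLip_eq]; positivity

lemma errSum_nonneg {α Lc LF Mc Mv Lv : ℝ} (hα : 0 ≤ α) (hLc : 0 ≤ Lc) (hLF : 0 ≤ LF)
    (hMc : 0 ≤ Mc) (hMv : 0 ≤ Mv) (hLv : 0 ≤ Lv) (t : ℕ) : 0 ≤ errSum α Lc LF Mc Mv Lv t := by
  induction t with
  | zero => simp [errSum]
  | succ n ih =>
    have h1 := valBd_nonneg hα hMc hMv n
    have h2 := valLip_nonneg hα hLc hLF hLv n
    rw [errSum]; positivity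

lemma sum_Icc_one (f : ℕ → ℝ) (n : ℕ) :
    ∑ j ∈ Finset.Icc 1 n, f j = ∑ j ∈ Finset.range n, f (j + 1) := by
  induction n with
  | zero => simp
  | succ n ih => rw [Finset.sum_Icc_succ_top (by omega), ih, Finset.sum_range_succ]

/-- The closed form of the error recursion. It needs at least one step: `Diff2` at `0` is
`Lv * LF`, not `0`. -/
lemma errSum_eq_Diff2 (α Lc LF Mc Mv Lv : ℝ) (n : ℕ) :
    errSum α Lc LF Mc Mv Lv (n + 1) = Diff2 α Lc LF Mc Mv Lv (n + 1) := by
  induction n with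
  | zero => simp [errSum, Diff2, valBd, valLip]; ring
  | succ n ih =>
    rw [errSum, ih, valBd_eq, valLip_eq]
    simp only [Diff2, sum_Icc_one, Nat.add_sub_cancel, Nat.add_sub_add_right]
    -- The two double sums are split at `j = 1`, the remaining terms being `α` times the old ones.
    rw [Finset.sum_range_succ' (fun j => α ^ (j + 1) * ∑ k ∈ Finset.range (n + 1 - j), α ^ k) n,
      Finset.sum_range_succ'
        (fun j => α ^ j * ∑ k ∈ Finset.range (n + 1 - j), (α * LF) ^ k) (n + 1),
      Finset.sum_range_succ (fun j => (α * LF) ^ (j + 1) * α ^ (n + 1 - j - 1)) n]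
    have e1 : ∑ j ∈ Finset.range n, α ^ (j + 1 + 1) * ∑ k ∈ Finset.range (n + 1 - (j + 1)), α ^ k
        = α * ∑ j ∈ Finset.range n, α ^ (j + 1) * ∑ k ∈ Finset.range (n - j), α ^ k := by
      rw [Finset.mul_sum]
      refine Finset.sum_congr rfl fun j _ => ?_
      rw [Nat.add_sub_add_right]; ring
    have e2 : ∑ j ∈ Finset.range (n + 1),
        α ^ (j + 1) * ∑ k ∈ Finset.range (n + 1 - (j + 1)), (α * LF) ^ k
        = α * ∑ j ∈ Finset.range (n + 1), α ^ j * ∑ k ∈ Finset.range (n - j), (α * LF) ^ k := by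
      rw [Finset.mul_sum]
      refine Finset.sum_congr rfl fun j _ => ?_
      rw [Nat.add_sub_add_right]; ring
    have e3 : ∑ j ∈ Finset.range n, (α * LF) ^ (j + 1) * α ^ (n + 1 - j - 1)
        = α * ∑ j ∈ Finset.range n, (α * LF) ^ (j + 1) * α ^ (n - j - 1) := by
      rw [Finset.mul_sum]
      refine Finset.sum_congr rfl fun j hj => ?_
      have hj := Finset.mem_range.1 hj
      rw [show n + 1 - j - 1 = (n - j - 1) + 1 by omega]; ring
    rw [e1, e2, e3, geom_sum_succ (n := n + 1), show n + 1 - n - 1 = 0 by omega]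
    push_cast
    ring

section Iterates

variable {X 𝔸 W : Type*} [MetricSpace X] [MetricSpace W] [MeasurableSpace W] [BorelSpace W]
  [Nonempty 𝔸] {F : X → 𝔸 → W → X} {c : X → 𝔸 → W → ℝ} {α Mc Lc LF Mv Lv : ℝ}

lemma LipData.isBL_iterate (H : LipData F c α Mc Lc LF) {v : X → ℝ} (hLv : 0 ≤ Lv)
    (hv : IsBL Mv Lv v) {P : Set (Measure W)} (hP : P.Nonempty)
    (hPp : ∀ ν ∈ P, IsProbabilityMeasure ν) (s : ℕ) :
    IsBL (valBd α Mc Mv s) (valLip α Lc LF Lv s) ((robustPhi F c α P)^[s] v) := by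
  induction s with
  | zero => exact hv
  | succ n ih =>
    rw [Function.iterate_succ_apply']
    exact ih.robustPhi H (valLip_nonneg H.hα H.hLc H.hLF hLv n) hP hPp

/-- The real-valued form of the estimate: `δ` is any constant controlling the bounded Lipschitz
distance from `μ` to the elements of `P`. -/
lemma LipData.main_bound (H : LipData F c α Mc Lc LF) {v : X → ℝ} (hLv : 0 ≤ Lv)
    (hMc : 0 ≤ Mc) (hMv : 0 ≤ Mv) (hv : IsBL Mv Lv v) (μ : Measure W) [IsProbabilityMeasure μ]
    {P : Set (Measure W)} (hP : P.Nonempty) (hPp : ∀ ν ∈ P, IsProbabilityMeasure ν) {δ : ℝ}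
    (hδ : ∀ ν ∈ P, ∀ (f : W → ℝ) (C L : ℝ), 0 ≤ C → 0 ≤ L → IsBL C L f →
      |∫ z, f z ∂μ - ∫ z, f z ∂ν| ≤ δ * (C + L)) (s : ℕ) :
    (∀ x a, |Qop F c α μ (s + 1) v x a - robustQop F c α P (s + 1) v x a| ≤
        δ * errSum α Lc LF Mc Mv Lv (s + 1)) ∧
    (∀ x, |(bellmanPhi F c α μ)^[s + 1] v x - (robustPhi F c α P)^[s + 1] v x| ≤
        δ * errSum α Lc LF Mc Mv Lv (s + 1)) := by
  have hBLμ : ∀ s, IsBL (valBd α Mc Mv s) (valLip α Lc LF Lv s)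
      ((bellmanPhi F c α μ)^[s] v) := by
    intro s
    rw [bellmanPhi_eq]
    refine H.isBL_iterate hLv hv (Set.singleton_nonempty μ) (fun ν hν => ?_) s
    rw [Set.mem_singleton_iff.1 hν]; infer_instance
  have hBL := H.isBL_iterate hLv hv hP hPp
  have hK := valLip_nonneg H.hα H.hLc H.hLF hLv
  have hM := valBd_nonneg H.hα hMc hMv
  have hQ : ∀ s, (∀ x, |(bellmanPhi F c α μ)^[s] v x - (robustPhi F c α P)^[s] v x| ≤
        δ * errSum α Lc LF Mc Mv Lv s) →
      ∀ x a, |Qop F c α μ (s + 1) v x a - robustQop F c α P (s + 1) v x a| ≤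
        δ * errSum α Lc LF Mc Mv Lv (s + 1) := by
    intro s hs x a
    have h := H.abs_integral_sub_stepQ_le (hM s) (hK s) (hK s) hMc (hBLμ s) (hBL s) hs μ hP hPp
      hδ x a
    refine h.trans (le_of_eq ?_)
    rw [errSum]; ring
  have hV : ∀ s, ∀ x, |(bellmanPhi F c α μ)^[s] v x - (robustPhi F c α P)^[s] v x| ≤
        δ * errSum α Lc LF Mc Mv Lv s := by
    intro s
    induction s with
    | zero => intro x; simp [errSum]
    | succ n ih =>
      intro x
      rw [Function.iterate_succ_apply', Function.iterate_succ_apply']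
      exact abs_iInf_sub_iInf_le
        (fun a => abs_integral_le_of_bound (H.isBL_integrand (hK n) (hBLμ n) x a).1 μ)
        (H.abs_stepQ_le (hK n) (hBL n) hP hPp x) (hQ n ih x)
  exact ⟨hQ s (hV s), hV (s + 1)⟩

end Iterates

/-- Lemma C.7: the true Q-operators and Bellman iterates (built from `μ_true`) differ from the
robust ones (built from the ambiguity set `P = {ν : d(ν,μ̂) ≤ ε}` around the empirical estimate
of `μ`) by at most `(ψ(d(μ,μ̂)) + ψ(ε) + β(μ_true,μ))·Diff₂(t,v)`. -/
theorem stmt_13 {X 𝔸 W : Type*}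
    [MetricSpace X] [TopologicalSpace.SeparableSpace X] [MeasurableSpace X] [BorelSpace X]
    [MetricSpace 𝔸] [TopologicalSpace.SeparableSpace 𝔸] [MeasurableSpace 𝔸] [BorelSpace 𝔸]
    [CompactSpace 𝔸] [Nonempty 𝔸]
    [MetricSpace W] [TopologicalSpace.SeparableSpace W] [MeasurableSpace W] [BorelSpace W]
    (μ : Measure W) [IsProbabilityMeasure μ]
    (μtrue : Measure W) [IsProbabilityMeasure μtrue]
    (c : X → 𝔸 → W → ℝ)
    (hccont : Continuous (fun p : X × 𝔸 × W => c p.1 p.2.1 p.2.2))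
    (Mc : ℝ) (hcbd : ∀ x a z, c x a z ≤ Mc) (hcnn : ∀ x a z, 0 ≤ c x a z)
    (F : X → 𝔸 → W → X)
    (hFcont : Continuous (fun p : X × 𝔸 × W => F p.1 p.2.1 p.2.2))
    (α : ℝ) (hα0 : 0 < α) (hα1 : α < 1)
    (Lc LF : ℝ) (hLc : 0 ≤ Lc) (hLF : 0 ≤ LF) (hαLF : α * LF < 1)
    (hcLipX : ∀ a z x₁ x₂, |c x₁ a z - c x₂ a z| ≤ Lc * dist x₁ x₂)
    (hcLipW : ∀ x a z₁ z₂, |c x a z₁ - c x a z₂| ≤ Lc * dist z₁ z₂)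
    (hFLipX : ∀ a z x₁ x₂, dist (F x₁ a z) (F x₂ a z) ≤ LF * dist x₁ x₂)
    (hFLipW : ∀ x a z₁ z₂, dist (F x a z₁) (F x a z₂) ≤ LF * dist z₁ z₂)
    (d : Measure W → Measure W → ℝ≥0∞) (hd0 : ∀ ν : Measure W, d ν ν = 0)
    (ψ : ℝ → ℝ) (hψcont : ContinuousOn ψ (Set.Ici 0)) (hψmono : MonotoneOn ψ (Set.Ici 0))
    (hψ0 : ψ 0 = 0) (hψnonneg : ∀ s : ℝ, 0 ≤ s → 0 ≤ ψ s)
    (hβψ : ∀ ν₁ ν₂ : Measure W, IsProbabilityMeasure ν₁ → IsProbabilityMeasure ν₂ →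
      d ν₁ ν₂ ≠ ⊤ → betaDist ν₁ ν₂ ≤ ψ (d ν₁ ν₂).toReal)
    (μhat : Measure W) [IsProbabilityMeasure μhat] (ε : ℝ≥0)
    (P : Set (Measure W))
    (hP : P = {ν : Measure W | IsProbabilityMeasure ν ∧ d ν μhat ≤ (ε : ℝ≥0∞)})
    (v : X → ℝ) (Lv : ℝ) (hLv : 0 ≤ Lv)
    (Mv : ℝ) (hvbd : ∀ x, |v x| ≤ Mv)
    (hvLip : ∀ x₁ x₂, |v x₁ - v x₂| ≤ Lv * dist x₁ x₂)
    (t : ℕ) (ht : 1 ≤ t) :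
    (∀ (x : X) (a : 𝔸),
      ENNReal.ofReal |Qop F c α μtrue t v x a - robustQop F c α P t v x a| ≤
        (psiE ψ (d μ μhat) + ENNReal.ofReal (ψ ε) + ENNReal.ofReal (betaDist μtrue μ)) *
          ENNReal.ofReal (Diff2 α Lc LF Mc Mv Lv t)) ∧
    (∀ x : X,
      ENNReal.ofReal |(bellmanPhi F c α μtrue)^[t] v x - (robustPhi F c α P)^[t] v x| ≤
        (psiE ψ (d μ μhat) + ENNReal.ofReal (ψ ε) + ENNReal.ofReal (betaDist μtrue μ)) *
          ENNReal.ofReal (Diff2 α Lc LF Mc Mv Lv t)) := by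
  obtain ⟨s, rfl⟩ : ∃ s, t = s + 1 := ⟨t - 1, by omega⟩
  rcases isEmpty_or_nonempty X with hX | ⟨⟨x₀⟩⟩
  · exact ⟨fun x => (hX.false x).elim, fun x => (hX.false x).elim⟩
  obtain ⟨z₀⟩ : Nonempty W := nonempty_of_isProbabilityMeasure μ
  obtain ⟨a₀⟩ := ‹Nonempty 𝔸›
  have : Nonempty 𝔸 := ⟨a₀⟩
  have hMc : 0 ≤ Mc := (hcnn x₀ a₀ z₀).trans (hcbd x₀ a₀ z₀)
  have hMv : 0 ≤ Mv := (abs_nonneg _).trans (hvbd x₀)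
  have H : LipData F c α Mc Lc LF :=
    ⟨hα0.le, hLc, hLF, fun x a z => by rw [abs_of_nonneg (hcnn x a z)]; exact hcbd x a z,
      hcLipX, hcLipW, hFLipX, hFLipW⟩
  have hPne : P.Nonempty := by
    refine ⟨μhat, ?_⟩
    rw [hP]
    exact ⟨inferInstance, by rw [hd0]; exact zero_le⟩
  have hPp : ∀ ν ∈ P, IsProbabilityMeasure ν := fun ν hν => by rw [hP] at hν; exact hν.1
  have hE := errSum_nonneg hα0.le hLc hLF hMc hMv hLv (s + 1)
  have hψε : 0 ≤ ψ ε := hψnonneg _ ε.2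
  have hβ := betaDist_nonneg μtrue μ
  have bound := fun δ => H.main_bound hLv hMc hMv ⟨hvbd, hvLip⟩ μtrue hPne hPp (δ := δ)
  rw [errSum_eq_Diff2] at hE
  simp only [errSum_eq_Diff2] at bound
  set D := Diff2 α Lc LF Mc Mv Lv (s + 1) with hD
  by_cases htop : d μ μhat = ⊤
  · -- The crude constant `2` shows that both differences vanish when `D = 0`.
    have h2 := bound 2 (fun ν hν f C L hC hL hf => by
      have := hPp ν hν
      exact (abs_integral_sub_le hC hL hf μtrue ν).trans
        (mul_le_mul_of_nonneg_right (betaDist_le_two μtrue ν) (add_nonneg hC hL))) s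
    have key : ∀ r : ℝ, r ≤ 2 * D → ENNReal.ofReal r ≤
        (psiE ψ (d μ μhat) + ENNReal.ofReal (ψ ε) + ENNReal.ofReal (betaDist μtrue μ)) *
          ENNReal.ofReal D := by
      intro r hr
      rcases hE.eq_or_lt with h0 | hpos
      · rw [ENNReal.ofReal_of_nonpos (by linarith)]; exact zero_le
      · rw [psiE, if_pos htop, top_add, top_add, ENNReal.top_mul (by simpa using hpos)]
        exact le_top
    exact ⟨fun x a => key _ (h2.1 x a), fun x => key _ (h2.2 x)⟩
  · have hψd : 0 ≤ ψ (d μ μhat).toReal := hψnonneg _ ENNReal.toReal_nonneg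
    have h2 := bound (ψ (d μ μhat).toReal + ψ ε + betaDist μtrue μ)
      (fun ν hν f C L hC hL hf => by
        have := hPp ν hν
        have hdν : d ν μhat ≤ (ε : ℝ≥0∞) := by rw [hP] at hν; exact hν.2
        have hfin : d ν μhat ≠ ⊤ := ne_top_of_le_ne_top ENNReal.coe_ne_top hdν
        have hψν : ψ (d ν μhat).toReal ≤ ψ ε := by
          refine hψmono (Set.mem_Ici.2 ENNReal.toReal_nonneg) (Set.mem_Ici.2 ε.2) ?_
          simpa using ENNReal.toReal_mono ENNReal.coe_ne_top hdν
        have hCL := add_nonneg hC hL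
        have b1 := abs_integral_sub_le hC hL hf μtrue μ
        have b2 := (abs_integral_sub_le hC hL hf μ μhat).trans
          (mul_le_mul_of_nonneg_right (hβψ μ μhat inferInstance inferInstance htop) hCL)
        have b3 := (abs_integral_sub_le hC hL hf ν μhat).trans
          (mul_le_mul_of_nonneg_right
            ((hβψ ν μhat inferInstance inferInstance hfin).trans hψν) hCL)
        rw [abs_sub_comm] at b3
        have t1 := abs_sub_le (∫ z, f z ∂μtrue) (∫ z, f z ∂μ) (∫ z, f z ∂ν)
        have t2 := abs_sub_le (∫ z, f z ∂μ) (∫ z, f z ∂μhat) (∫ z, f z ∂ν)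
        linarith) s
    rw [psiE, if_neg htop, ← ENNReal.ofReal_add hψd hψε,
      ← ENNReal.ofReal_add (add_nonneg hψd hψε) hβ, ← ENNReal.ofReal_mul (by positivity)]
    exact ⟨fun x a => ENNReal.ofReal_le_ofReal (h2.1 x a),
      fun x => ENNReal.ofReal_le_ofReal (h2.2 x)⟩
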